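/- (ZF) For every countable non-standard model N of PA there is a family (M_X : X ⊆ 2^ω) of models such that each M_X is an elementary extension of N, the cardinality of M_X and of SSy(M_X) both equal max{ω, |X|}, and for all X, Y ⊆ 2^ω: X ⊆ Y ⟺ M_X is an elementary submodel of M_Y ⟺ SSy(M_X) ⊆ SSy(M_Y). -/

import Mathlib

open FirstOrder FirstOrder.Language

/-- Function symbols of the language of arithmetic: `0`, `1`, `+`, `·`. -/
inductive arithFunc : ℕ → Type
  | zero : arithFunc 0
  | one : arithFunc 0
  | add : arithFunc 2
  | mul : arithFunc 2
  deriving DecidableEq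

/-- Relation symbols of the language of arithmetic: `<`. -/
inductive arithRel : ℕ → Type
  | lt : arithRel 2
  deriving DecidableEq

/-- The first-order language of arithmetic `{0, 1, +, ·, <}`. -/
def arith : FirstOrder.Language := ⟨arithFunc, arithRel⟩

namespace Arith

variable {M : Type*} [arith.Structure M]

/-- The interpretation of `0`. -/
def zeroM (M : Type*) [arith.Structure M] : M :=
  Structure.funMap (L := arith) arithFunc.zero ![]

/-- The interpretation of `1`. -/
def oneM (M : Type*) [arith.Structure M] : M :=
  Structure.funMap (L := arith) arithFunc.one ![]

/-- The interpretation of `+`. -/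
def addM (x y : M) : M := Structure.funMap (L := arith) arithFunc.add ![x, y]

/-- The interpretation of `·`. -/
def mulM (x y : M) : M := Structure.funMap (L := arith) arithFunc.mul ![x, y]

/-- The interpretation of `<`. -/
def ltM (x y : M) : Prop := Structure.RelMap (L := arith) arithRel.lt ![x, y]

/-- Non-strict order. -/
def leM (x y : M) : Prop := ltM x y ∨ x = y

/-- The numeral `n` in `M`: `0`, or `1 + 1 + ⋯ + 1`. -/
def numeral (M : Type*) [arith.Structure M] : ℕ → M
  | 0 => zeroM M
  | n + 1 => addM (numeral M n) (oneM M)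

/-- The standard `arith`-structure on `ℕ`. -/
instance : arith.Structure ℕ where
  funMap {n} f v :=
    match f with
    | .zero => 0
    | .one => 1
    | .add => v 0 + v 1
    | .mul => v 0 * v 1
  RelMap {n} r v :=
    match r with
    | .lt => v 0 < v 1

/-- `M` is a model of Peano arithmetic: it satisfies the finitely many basic axioms of
`PA` together with induction for all parametrically definable sets (which is equivalent
to the usual first-order induction scheme). -/
def IsPAModel (M : Type*) [arith.Structure M] : Prop :=
  (∀ x : M, addM x (zeroM M) = x) ∧
  (∀ x y : M, addM x (addM y (oneM M)) = addM (addM x y) (oneM M)) ∧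
  (∀ x : M, mulM x (zeroM M) = zeroM M) ∧
  (∀ x y : M, mulM x (addM y (oneM M)) = addM (mulM x y) x) ∧
  (∀ x : M, ¬ ltM x (zeroM M)) ∧
  (∀ x y : M, ltM x (addM y (oneM M)) ↔ (ltM x y ∨ x = y)) ∧
  (∀ x : M, addM x (oneM M) ≠ zeroM M) ∧
  (∀ x y : M, addM x (oneM M) = addM y (oneM M) → x = y) ∧
  (∀ s : Set M, Set.Definable₁ (Set.univ : Set M) arith s →
    zeroM M ∈ s → (∀ x ∈ s, addM x (oneM M) ∈ s) → ∀ x : M, x ∈ s)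

/-- An element of `M` is standard if it is a numeral. -/
def IsStd (x : M) : Prop := ∃ n : ℕ, x = numeral M n

/-- `M` is a non-standard model of `PA`: a model of `PA` not isomorphic to the standard
model `ℕ`. -/
def NonstandardModel (M : Type*) [arith.Structure M] : Prop :=
  IsPAModel M ∧ ¬ Nonempty (M ≃[arith] ℕ)

/-- `(x)_i = 1`: the `i`-th binary digit of `x` is `1`, for standard `i`.  This is expressed
by saying that `x = u·2^(i+1) + (2^i + v)` with `v < 2^i`, where `2^i`, `2^(i+1)` are
numerals. -/
def digitB (x : M) (i : ℕ) : Prop :=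
  ∃ u v : M, x = addM (mulM u (numeral M (2 ^ (i + 1)))) (addM (numeral M (2 ^ i)) v) ∧
    ltM v (numeral M (2 ^ i))

/-- The standard system of `M`: the collection of subsets of `ℕ` coded by some
non-standard element of `M` (via its standard binary digits). -/
def SSy (M : Type*) [arith.Structure M] : Set (Set ℕ) :=
  {X | ∃ a : M, ¬ IsStd a ∧ ∀ i : ℕ, i ∈ X ↔ digitB a i}

/-- A function `M → M` is definable (with parameters) if its graph is a definable set. -/
def DefinableFun₁ (f : M → M) : Prop :=
  Set.Definable (Set.univ : Set M) arith {v : Fin 2 → M | f (v 0) = v 1}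

/-- A `k`-ary function `M^k → M` is definable (with parameters) if its graph is a
definable set. -/
def DefinableFun {k : ℕ} (F : (Fin k → M) → M) : Prop :=
  Set.Definable (Set.univ : Set M) arith
    {v : Fin (k + 1) → M | F (fun i => v i.castSucc) = v (Fin.last k)}

/-- `c` is the internal cardinality of the set `D ⊆ M`: there is an `M`-definable
bijection between `{x : x < c}` and `D`. -/
def InternalCard (D : Set M) (c : M) : Prop :=
  ∃ f : M → M, DefinableFun₁ f ∧ Set.BijOn f {x : M | ltM x c} D

/-- `y = 2^x` in the model `M`, expressed via the existence of a definable function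
satisfying the recursion of the base-`2` exponential up to `x`. -/
def IsPow2 (x y : M) : Prop :=
  ∃ f : M → M, DefinableFun₁ f ∧ f (zeroM M) = oneM M ∧
    (∀ z : M, ltM z x → f (addM z (oneM M)) = addM (f z) (f z)) ∧ f x = y

end Arith

section Density

open Finset

/-- The proportion of the points of a finite type that lie in `D`. -/
noncomputable def density {X : Type*} [Fintype X] (D : Set X) : ℝ :=
  (∑ x, D.indicator (fun _ => (1 : ℝ)) x) / Fintype.card X

variable {X Y : Type*} [Fintype X] [Fintype Y]

theorem density_nonneg (D : Set X) : 0 ≤ density D :=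
  div_nonneg (sum_nonneg fun _ _ => Set.indicator_nonneg (fun _ _ => zero_le_one) _)
    (Nat.cast_nonneg _)

theorem density_mono {D E : Set X} (h : D ⊆ E) : density D ≤ density E := by
  unfold density
  gcongr with x

theorem density_univ [Nonempty X] : density (Set.univ : Set X) = 1 := by
  simp [density]

theorem density_diff_ge (D B : Set X) : density D - density B ≤ density (D \ B) := by
  classical
  unfold density
  rw [← sub_div, ← sum_sub_distrib]
  gcongr with x
  by_cases h1 : x ∈ D <;> by_cases h2 : x ∈ B <;> simp [h1, h2]

theorem density_iUnion_le {ι : Type*} [Fintype ι] (B : ι → Set X) :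
    density (⋃ i, B i) ≤ ∑ i, density (B i) := by
  classical
  unfold density
  rw [← sum_div, sum_comm]
  gcongr with x
  by_cases h : ∃ i, x ∈ B i
  · obtain ⟨i, hi⟩ := h
    calc (⋃ i, B i).indicator (fun _ => (1 : ℝ)) x ≤ 1 := Set.indicator_le_self' (by simp) x
      _ = (B i).indicator (fun _ => (1 : ℝ)) x := by simp [hi]
      _ ≤ _ := single_le_sum (f := fun i => (B i).indicator (fun _ => (1 : ℝ)) x)
        (fun _ _ => Set.indicator_nonneg (fun _ _ => zero_le_one) _) (mem_univ i)
  · have : x ∉ ⋃ i, B i := by simpa using h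
    rw [Set.indicator_of_notMem this]
    exact sum_nonneg fun _ _ => Set.indicator_nonneg (fun _ _ => zero_le_one) _

theorem nonempty_of_density_pos {D : Set X} (h : 0 < density D) : D.Nonempty := by
  by_contra hD
  rw [Set.not_nonempty_iff_eq_empty] at hD
  simp [density, hD] at h

theorem density_mul_card_le_one {D : Set X} (g : D × Y → X) (hg : g.Injective) :
    density D * Fintype.card Y ≤ 1 := by
  classical
  have h1 : Fintype.card D * Fintype.card Y ≤ Fintype.card X := by
    rw [← Fintype.card_prod]
    exact Fintype.card_le_of_injective g hg
  have h2 : (∑ x, D.indicator (fun _ => (1 : ℝ)) x) = Fintype.card D := by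
    rw [Fintype.card_subtype]
    simp [Set.indicator_apply]
  unfold density
  rw [h2, div_mul_eq_mul_div]
  exact div_le_one_of_le₀ (by exact_mod_cast h1) (Nat.cast_nonneg _)

/-- Resampling one coordinate preserves sums over a power of a finite type. -/
theorem sum_sum_update {ι A : Type*} [Fintype ι] [DecidableEq ι] [Fintype A]
    (c : ι) (F : (ι → A) → ℝ) :
    ∑ x, ∑ z, F (Function.update x c z) = Fintype.card A * ∑ x, F x := by
  have hinv : Function.Involutive
      (fun p : (ι → A) × A => ((Function.update p.1 c p.2, p.1 c) : (ι → A) × A)) := by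
    rintro ⟨x, z⟩
    simp
  rw [← Fintype.sum_prod_type' (f := fun x z => F (Function.update x c z)),
    Fintype.sum_equiv hinv.toPerm (fun p : (ι → A) × A => F (Function.update p.1 c p.2))
      (fun p => F p.1) (fun _ => rfl), Fintype.sum_prod_type]
  simp [mul_sum]

/-- Doubling a coordinate squares the density at worst, by the Cauchy–Schwarz inequality. -/
theorem sq_density_le {ι A : Type*} [Fintype ι] [DecidableEq ι] [Fintype A] [Nonempty A]
    {b c : ι} (hbc : b ≠ c) (E : Set (ι → A))
    (hE : ∀ x z, Function.update x b z ∈ E ↔ x ∈ E) :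
    density E ^ 2 ≤ density {x | x ∈ E ∧ x ∘ Equiv.swap b c ∈ E} := by
  classical
  set F : (ι → A) → ℝ := E.indicator (fun _ => (1 : ℝ)) with hF
  set G : (ι → A) → ℝ := fun y => F y * F (y ∘ Equiv.swap b c) with hG
  have hFb : ∀ x z, F (Function.update x b z) = F x := by
    intro x z
    simp only [hF, Set.indicator_apply, hE]
  have hupd : ∀ x z z', G (Function.update (Function.update x c z) b z') =
      F (Function.update x c z) * F (Function.update x c z') := by
    intro x z z'
    have : Function.update (Function.update x c z) b z' ∘ Equiv.swap b c =
        Function.update (Function.update x c z') b z := by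
      ext i
      by_cases hib : i = b
      · subst hib
        simp [Function.update_of_ne hbc.symm]
      by_cases hic : i = c
      · subst hic
        simp [Function.update_of_ne hib]
      · simp [Equiv.swap_apply_of_ne_of_ne hib hic, hib, hic]
    simp only [hG, this, hFb]
  have hsq : ∑ x, (∑ z, F (Function.update x c z)) ^ 2 =
      Fintype.card A * (Fintype.card A * ∑ x, G x) := by
    rw [← sum_sum_update b G, ← sum_sum_update c]
    refine sum_congr rfl fun x _ => ?_
    rw [sq, sum_mul_sum]
    simp only [hupd]
  have hcs := sq_sum_le_card_mul_sum_sq (s := (univ : Finset (ι → A)))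
    (f := fun x => ∑ z, F (Function.update x c z))
  rw [hsq, sum_sum_update] at hcs
  have hA : (0 : ℝ) < Fintype.card A := by exact_mod_cast Fintype.card_pos
  have hX : (0 : ℝ) < Fintype.card (ι → A) := by exact_mod_cast Fintype.card_pos
  have hG' : ∀ x, G x =
      {x | x ∈ E ∧ x ∘ Equiv.swap b c ∈ E}.indicator (fun _ => (1 : ℝ)) x := by
    intro x
    by_cases h1 : x ∈ E <;> by_cases h2 : x ∘ Equiv.swap b c ∈ E <;> simp [hG, hF, h1, h2]
  unfold density
  simp only [← hG']
  rw [div_pow, div_le_div_iff₀ (by positivity) hX]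
  rw [card_univ] at hcs
  have : (∑ x, F x) ^ 2 ≤ Fintype.card (ι → A) * ∑ x, G x := by
    have h := hcs
    rw [mul_pow] at h
    have hA2 : (0 : ℝ) < (Fintype.card A : ℝ) ^ 2 := by positivity
    refine le_of_mul_le_mul_left ?_ hA2
    calc _ ≤ _ := h
      _ = _ := by ring
  calc _ ≤ (Fintype.card (ι → A) * ∑ x, G x) * (Fintype.card (ι → A) : ℝ) := by gcongr
    _ = _ := by ring

/-- The tuples all of whose selections of one out of each pair of coordinates lie in `D`. -/
def doubling {K A : Type*} (D : Set (K → A)) : Set (K × Bool → A) :=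
  {x | ∀ s : K → Bool, (fun u => x (u, s u)) ∈ D}

theorem pow_density_le_density_doubling {K A : Type*} [Fintype K] [DecidableEq K]
    [Fintype A] [Nonempty A] (D : Set (K → A)) :
    density D ^ 2 ^ Fintype.card K ≤ density (doubling D) := by
  have key : ∀ S : Finset K, density D ^ 2 ^ #S ≤
      density {x : K × Bool → A |
        ∀ s : K → Bool, (∀ u ∉ S, s u = false) → (fun u => x (u, s u)) ∈ D} := by
    intro S
    induction S using Finset.induction_on with
    | empty =>
      have hset : {x : K × Bool → A | ∀ s : K → Bool, (∀ u ∉ (∅ : Finset K), s u = false) →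
          (fun u => x (u, s u)) ∈ D} = {x | (fun u => x (u, false)) ∈ D} := by
        ext x
        constructor
        · intro h
          exact h (fun _ => false) (by simp)
        · intro h s hs
          have : s = fun _ => false := funext fun u => hs u (by simp)
          subst this
          exact h
      rw [hset, Finset.card_empty, pow_zero, pow_one]
      let e : (K × Bool → A) ≃ (K → A) × (K → A) :=
        ((Equiv.prodComm K Bool).arrowCongr (Equiv.refl A)).trans
          ((Equiv.curry Bool K A).trans (Equiv.boolArrowEquivProd (K → A)))
      have he : ∀ x, (e x).1 = fun u => x (u, false) := fun x => rfl
      have hsum : ∑ x : K × Bool → A,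
          {x : K × Bool → A | (fun u => x (u, false)) ∈ D}.indicator (fun _ => (1 : ℝ)) x =
          Fintype.card (K → A) * ∑ x, D.indicator (fun _ => (1 : ℝ)) x := by
        rw [Fintype.sum_equiv e _ (fun p => D.indicator (fun _ => (1 : ℝ)) p.1)
          (fun x => by rw [he]; rfl), Fintype.sum_prod_type]
        simp [mul_sum]
      have hcard : (Fintype.card (K × Bool → A) : ℝ) =
          Fintype.card (K → A) * Fintype.card (K → A) := by
        rw [Fintype.card_congr e, Fintype.card_prod, Nat.cast_mul]
      have hX : (0 : ℝ) < Fintype.card (K → A) := by exact_mod_cast Fintype.card_pos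
      unfold density
      rw [hsum, hcard, mul_div_mul_left _ _ hX.ne']
    | insert a S ha ih =>
      rw [card_insert_of_notMem ha, pow_succ, pow_mul]
      refine (pow_le_pow_left₀ (pow_nonneg (density_nonneg _) _) ih 2).trans ?_
      refine (sq_density_le (b := (a, true)) (c := (a, false)) (by simp) _ ?_).trans
        (density_mono ?_)
      · intro x z
        refine forall_congr' fun s => imp_congr_right fun hs => ?_
        have : (fun u => Function.update x (a, true) z (u, s u)) = fun u => x (u, s u) := by
          ext u
          refine Function.update_of_ne (fun h => ?_) _ _
          obtain ⟨rfl, h⟩ := Prod.mk.inj h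
          rw [hs _ ha] at h
          exact absurd h (by simp)
        rw [this]
      · rintro x ⟨h1, h2⟩ s hs
        by_cases hsa : s a = false
        · refine h1 s fun u hu => ?_
          by_cases hua : u = a
          · rw [hua, hsa]
          · exact hs u (by simp [hua, hu])
        · have h := h2 (Function.update s a false) fun u hu => ?_
          · convert h using 2 with u
            by_cases hua : u = a
            · subst hua
              simp only [Bool.not_eq_false] at hsa
              simp [hsa]
            · have h1 : ((u, s u) : K × Bool) ≠ (a, true) := fun h => hua (Prod.mk.inj h).1
              have h2 : ((u, s u) : K × Bool) ≠ (a, false) := fun h => hua (Prod.mk.inj h).1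
              simp [Function.update_of_ne hua, Equiv.swap_apply_of_ne_of_ne h1 h2]
          · by_cases hua : u = a
            · simp [hua]
            · rw [Function.update_of_ne hua]
              exact hs u (by simp [hua, hu])
  refine (key univ).trans (density_mono fun x hx s => hx s (by simp))

end Density

section Tree

/-- Binary strings of length `n`. -/
def Level : ℕ → Type
  | 0 => Unit
  | n + 1 => Level n × Bool

namespace Level

instance instFintype : ∀ n, Fintype (Level n)
  | 0 => inferInstanceAs (Fintype Unit)
  | n + 1 => @instFintypeProd _ _ (instFintype n) _

instance instDecidableEq : ∀ n, DecidableEq (Level n)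
  | 0 => inferInstanceAs (DecidableEq Unit)
  | n + 1 => @instDecidableEqProd _ _ (instDecidableEq n) _

/-- The initial segment of length `n` of an infinite binary sequence. -/
def restrict : (n : ℕ) → (ℕ → Bool) → Level n
  | 0, _ => ()
  | n + 1, f => (restrict n f, f n)

theorem restrict_eq_iff {f g : ℕ → Bool} :
    ∀ {n : ℕ}, restrict n f = restrict n g ↔ ∀ a < n, f a = g a
  | 0 => iff_of_true rfl (by simp)
  | n + 1 => by
    have : restrict (n + 1) f = restrict (n + 1) g ↔ restrict n f = restrict n g ∧ f n = g n :=
      Prod.mk_inj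
    rw [this, restrict_eq_iff]
    constructor
    · rintro ⟨h1, h2⟩ a ha
      rcases Nat.lt_succ_iff_lt_or_eq.1 ha with h | rfl
      exacts [h1 a h, h2]
    · exact fun h => ⟨fun a ha => h a (by omega), h n (by omega)⟩

theorem restrict_surjective : ∀ n, Function.Surjective (restrict n)
  | 0 => fun _ => ⟨fun _ => false, rfl⟩
  | n + 1 => by
    rintro ⟨u, b⟩
    obtain ⟨f, rfl⟩ := restrict_surjective n u
    refine ⟨Function.update f n b, Prod.ext (restrict_eq_iff.2 fun a ha => ?_)
      (Function.update_self ..)⟩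
    simp [ha.ne]

theorem eventually_injOn_restrict {F : Set (ℕ → Bool)} (hF : F.Finite) :
    ∀ᶠ k in Filter.atTop, Set.InjOn (restrict k) F := by
  have : ∀ᶠ k in Filter.atTop, ∀ f ∈ F, ∀ g ∈ F, restrict k f = restrict k g → f = g := by
    refine (Filter.eventually_all_finite hF).2 fun f _ =>
      (Filter.eventually_all_finite hF).2 fun g _ => ?_
    by_cases hfg : f = g
    · exact Filter.Eventually.of_forall fun _ _ => hfg
    · obtain ⟨a, ha⟩ := Function.ne_iff.1 hfg
      filter_upwards [Filter.eventually_gt_atTop a] with k hk h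
      exact absurd (restrict_eq_iff.1 h a hk) ha
  filter_upwards [this] with k hk f hf g hg h using hk f hf g hg h

/-- Finitely many branches that are separated at level `k` extend to a choice of a branch
through every node of level `k`. -/
theorem exists_section {F : Set (ℕ → Bool)} {k : ℕ} (hF : Set.InjOn (restrict k) F) :
    ∃ s : Level k → ℕ → Bool, (∀ u, restrict k (s u) = u) ∧ ∀ f ∈ F, s (restrict k f) = f := by
  classical
  have h : ∀ u : Level k, ∃ f, restrict k f = u ∧ ∀ g ∈ F, restrict k g = u → f = g := by
    intro u
    by_cases hu : ∃ g ∈ F, restrict k g = u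
    · obtain ⟨g, hg, rfl⟩ := hu
      exact ⟨g, rfl, fun g' hg' h => hF hg hg' h.symm⟩
    · obtain ⟨f, hf⟩ := restrict_surjective k u
      exact ⟨f, hf, fun g hg h => absurd ⟨g, hg, h⟩ hu⟩
  choose s hs hs' using h
  exact ⟨s, hs, fun f hf => hs' _ f hf rfl⟩

end Level

/-- The labellings of the `n`-th level of the tree such that, for `k ≤ n`, no labelling
induced on level `k` by a choice of extensions to level `n` is in `Bad k`. -/
def goodLabels {A : Type*} (Bad : ∀ n, Set (Level n → A)) : ∀ n, Set (Level n → A)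
  | 0 => Set.univ \ Bad 0
  | n + 1 => doubling (goodLabels Bad n) \ Bad (n + 1)

theorem goodLabels_disjoint {A : Type*} (Bad : ∀ n, Set (Level n → A)) :
    ∀ {n : ℕ} {x : Level n → A}, x ∈ goodLabels Bad n → x ∉ Bad n
  | 0, _, h => h.2
  | _ + 1, _, h => h.2

theorem goodLabels_restrict {A : Type*} {Bad : ∀ n, Set (Level n → A)} {k : ℕ}
    (s : Level k → ℕ → Bool) (hs : ∀ u, Level.restrict k (s u) = u) {n : ℕ} (hkn : k ≤ n) :
    ∀ {x : Level n → A}, x ∈ goodLabels Bad n →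
      (fun u => x (Level.restrict n (s u))) ∈ goodLabels Bad k := by
  induction n, hkn using Nat.le_induction with
  | base =>
    intro x hx
    simpa only [hs] using hx
  | succ n hkn ih =>
    intro x hx
    have hinj : Function.Injective fun u => Level.restrict n (s u) := by
      intro u v huv
      rw [← hs u, ← hs v, Level.restrict_eq_iff]
      exact fun a ha => Level.restrict_eq_iff.1 huv a (by omega)
    have h := ih (hx.1 (Function.extend (fun u => Level.restrict n (s u)) (fun u => s u n)
      fun _ => false))
    simp only [hinj.extend_apply] at h
    exact h

/-- A lower bound for the density of doubled good labellings. -/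
noncomputable def levelDensity : ℕ → ℝ
  | 0 => 1
  | n + 1 => (levelDensity n / 2) ^ 2 ^ Fintype.card (Level n)

theorem levelDensity_pos : ∀ n, 0 < levelDensity n
  | 0 => one_pos
  | n + 1 => pow_pos (half_pos (levelDensity_pos n)) _

theorem density_goodLabels_ge {A : Type*} [Fintype A] [Nonempty A]
    (Bad : ∀ n, Set (Level n → A)) {n : ℕ}
    (hBad : ∀ k ≤ n, density (Bad k) ≤ levelDensity k / 2) :
    levelDensity n / 2 ≤ density (goodLabels Bad n) := by
  induction n with
  | zero =>
    have h := density_diff_ge Set.univ (Bad 0)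
    have h0 := hBad 0 le_rfl
    rw [density_univ] at h
    simp only [levelDensity, goodLabels] at *
    linarith
  | succ n ih =>
    have ih := ih fun k hk => hBad k (by omega)
    have h1 : levelDensity (n + 1) ≤ density (doubling (goodLabels Bad n)) :=
      (pow_le_pow_left₀ (half_pos (levelDensity_pos n)).le ih _).trans
        (pow_density_le_density_doubling _)
    have h2 := density_diff_ge (X := Level (n + 1) → A) (doubling (goodLabels Bad n))
      (Bad (n + 1))
    have h3 := hBad (n + 1) le_rfl
    change _ ≤ density (X := Level (n + 1) → A) (doubling (goodLabels Bad n) \ Bad (n + 1))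
    change levelDensity (n + 1) ≤
      density (X := Level (n + 1) → A) (doubling (goodLabels Bad n)) at h1
    linarith

/-- A function of the other coordinates predicts the first `i` bits of a coordinate with
probability at most `2⁻ⁱ`. -/
theorem density_bits_eq_le {K : Type*} [Fintype K] [DecidableEq K] {m i : ℕ} (hi : i ≤ m)
    (σ : K) (P : (K → Fin m → Bool) → ℕ → Prop)
    (hP : ∀ x y, (∀ τ ≠ σ, x τ = y τ) → P x = P y) :
    density {x : K → Fin m → Bool | ∀ l (hl : l < i), x σ ⟨l, hl.trans_le hi⟩ = true ↔ P x l} ≤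
      1 / 2 ^ i := by
  classical
  have h := density_mul_card_le_one (Y := Fin i → Bool)
    (D := {x : K → Fin m → Bool | ∀ l (hl : l < i), x σ ⟨l, hl.trans_le hi⟩ = true ↔ P x l})
    (fun p => Function.update p.1.1 σ
      fun l => if hl : l.1 < i then p.2 ⟨l.1, hl⟩ else p.1.1 σ l) ?_
  · rw [le_div_iff₀ (by positivity)]
    simpa using h
  · rintro ⟨⟨x, hx⟩, b⟩ ⟨⟨y, hy⟩, c⟩ hxy
    have hσ := congrFun hxy σ
    simp only [Function.update_self] at hσ
    have hne : ∀ τ ≠ σ, x τ = y τ := fun τ hτ => by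
      simpa [Function.update_of_ne hτ] using congrFun hxy τ
    have hbc : b = c := by
      ext l
      have := congrFun hσ ⟨l.1, l.2.trans_le hi⟩
      simpa using this
    have hxy' : x = y := by
      ext τ l
      by_cases hτ : τ = σ
      · subst hτ
        by_cases hl : l.1 < i
        · rw [Bool.eq_iff_iff]
          exact (hx l.1 hl).trans ((by rw [hP x y hne]) : _ ↔ _) |>.trans (hy l.1 hl).symm
        · have := congrFun hσ l
          simpa [hl] using this
      · rw [hne τ hτ]
    subst hbc hxy'
    rfl

/-- There is a labelling of the binary tree such that along distinct branches the labels are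
mutually generic with respect to a given sequence of functions: none of these functions
computes, in the limit, the digits along a branch from the labels along finitely many other
branches. -/
theorem exists_generic_labels {N : Type*} (digit : N → ℕ → Prop)
    (num : ∀ m, (Fin m → Bool) → N)
    (hnum : ∀ m a l (hl : l < m), digit (num m a) l ↔ a ⟨l, hl⟩ = true)
    (p : ℕ → ℕ) (h : ∀ j, (Fin (p j) → N) → N) :
    ∃ x : ∀ n, Level n → N, ∀ (j : ℕ) (ρ : Fin (p j) → ℕ → Bool) (f : ℕ → Bool),
      f ∉ Set.range ρ → ∃ i k, ∀ n ≥ k, ∃ l < i,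
        ¬ (digit (x n (Level.restrict n f)) l ↔
          digit (h j fun q => x n (Level.restrict n (ρ q))) l) := by
  classical
  let R : ℕ → Type := fun k => Σ j : Fin k, (Fin (p j) → Level k) × Level k
  have hi : ∀ k, ∃ i : ℕ, (Fintype.card (R k) : ℝ) * (1 / 2 ^ i) ≤ levelDensity k / 2 := by
    intro k
    have hpos : 0 < levelDensity k / 2 / (Fintype.card (R k) + 1) :=
      div_pos (half_pos (levelDensity_pos k)) (by positivity)
    obtain ⟨i, hi⟩ := exists_pow_lt_of_lt_one hpos (by norm_num : (1 / 2 : ℝ) < 1)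
    refine ⟨i, ?_⟩
    rw [lt_div_iff₀ (by positivity)] at hi
    rw [one_div_pow] at hi
    have : (0 : ℝ) ≤ 1 / 2 ^ i := by positivity
    nlinarith
  choose i hi using hi
  let m : ℕ → ℕ := fun n => (Finset.range (n + 1)).sup i
  have him : ∀ {k n}, k ≤ n → i k ≤ m n := fun {k n} hk =>
    Finset.le_sup (f := i) (Finset.mem_range.2 (by omega))
  let Bad : ∀ n k, Set (Level k → Fin (m n) → Bool) := fun n k =>
    ⋃ r : R k, {y | r.2.2 ∉ Set.range r.2.1 ∧ ∀ l < i k,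
      (digit (num (m n) (y r.2.2)) l ↔ digit (h r.1 fun q => num (m n) (y (r.2.1 q))) l)}
  have hBad : ∀ n, ∀ k ≤ n, density (Bad n k) ≤ levelDensity k / 2 := by
    intro n k hk
    refine (density_iUnion_le _).trans (le_trans ?_ (hi k))
    rw [← nsmul_eq_mul]
    refine Finset.sum_le_card_nsmul _ _ _ fun r _ => ?_
    by_cases hr : r.2.2 ∉ Set.range r.2.1
    · refine (density_mono ?_).trans (density_bits_eq_le (him hk) r.2.2
        (fun y => digit (h r.1 fun q => num (m n) (y (r.2.1 q)))) ?_)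
      · rintro y ⟨-, hy⟩ l hl
        rw [← hnum _ _ _ (hl.trans_le (him hk))]
        exact hy l hl
      · intro y z hyz
        have : ∀ q, y (r.2.1 q) = z (r.2.1 q) := fun q => hyz _ fun hq => hr ⟨q, hq⟩
        simp only [this]
    · simp only [hr, false_and]
      simp [density]
  have hne : ∀ n, (goodLabels (Bad n) n).Nonempty := fun n =>
    nonempty_of_density_pos
      ((half_pos (levelDensity_pos n)).trans_le (density_goodLabels_ge (Bad n) (hBad n)))
  choose y hy using hne
  refine ⟨fun n u => num (m n) (y n u), fun j ρ f hf => ?_⟩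
  obtain ⟨k, hk, hjk⟩ := ((Level.eventually_injOn_restrict
    ((Set.finite_range ρ).insert f)).and (Filter.eventually_gt_atTop j)).exists
  obtain ⟨s, hs, hsF⟩ := Level.exists_section hk
  refine ⟨i k, k, fun n hn => ?_⟩
  have hgood := goodLabels_disjoint _ (goodLabels_restrict s hs hn (hy n))
  by_contra! hcon
  refine hgood (Set.mem_iUnion.2 ⟨⟨⟨j, hjk⟩, fun q => Level.restrict k (ρ q),
    Level.restrict k f⟩, ?_, fun l hl => ?_⟩)
  · rintro ⟨q, hq⟩
    exact hf ⟨q, hk (Set.mem_insert_of_mem _ ⟨q, rfl⟩) (Set.mem_insert _ _) hq⟩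
  · have h1 : s (Level.restrict k f) = f := hsF f (Set.mem_insert _ _)
    have h2 : ∀ q, s (Level.restrict k (ρ q)) = ρ q :=
      fun q => hsF _ (Set.mem_insert_of_mem _ ⟨q, rfl⟩)
    simp only [h1, h2]
    exact hcon l hl

end Tree

namespace Arith

section Numerals

variable {M : Type*} [arith.Structure M]

namespace IsPAModel

theorem eq_zero_or_succ (hM : IsPAModel M) (b : M) :
    b = zeroM M ∨ ∃ y, b = addM y (oneM M) := by
  obtain ⟨-, -, -, -, -, -, -, -, ind⟩ := hM
  by_contra! h
  refine ind {b}ᶜ ?_ (fun h0 => h.1 h0.symm) (fun x _ hx => h.2 x hx.symm) b rfl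
  exact (Set.Definable.singleton_of_mem (L := arith) (Set.mem_univ b)).compl

theorem addM_numeral (hM : IsPAModel M) (m n : ℕ) :
    addM (numeral M m) (numeral M n) = numeral M (m + n) := by
  induction n with
  | zero => exact hM.1 _
  | succ n ih =>
    rw [numeral, hM.2.1, ih]
    rfl

theorem mulM_numeral (hM : IsPAModel M) (m n : ℕ) :
    mulM (numeral M m) (numeral M n) = numeral M (m * n) := by
  induction n with
  | zero => exact hM.2.2.1 _
  | succ n ih =>
    rw [numeral, hM.2.2.2.1, ih, hM.addM_numeral]
    rfl

theorem numeral_injective (hM : IsPAModel M) : Function.Injective (numeral M) := by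
  obtain ⟨-, -, -, -, -, -, hne, hinj, -⟩ := hM
  intro m
  induction m with
  | zero =>
    rintro (_ | n) h
    · rfl
    · exact absurd h.symm (hne _)
  | succ m ih =>
    rintro (_ | n) h
    · exact absurd h (hne _)
    · rw [ih (hinj _ _ h)]

theorem ltM_numeral_iff (hM : IsPAModel M) {x : M} {n : ℕ} :
    ltM x (numeral M n) ↔ ∃ m < n, x = numeral M m := by
  obtain ⟨-, -, -, -, hlt0, hlts, -, -, -⟩ := hM
  induction n with
  | zero => simp [numeral, hlt0]
  | succ n ih =>
    rw [numeral, hlts, ih]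
    constructor
    · rintro (⟨m, hm, rfl⟩ | rfl)
      · exact ⟨m, by omega, rfl⟩
      · exact ⟨n, by omega, rfl⟩
    · rintro ⟨m, hm, rfl⟩
      rcases Nat.lt_succ_iff_lt_or_eq.1 hm with h | rfl
      · exact Or.inl ⟨m, h, rfl⟩
      · exact Or.inr rfl

theorem isStd_of_addM_eq_numeral (hM : IsPAModel M) {n : ℕ} :
    ∀ {x y : M}, addM x y = numeral M n → IsStd x ∧ IsStd y := by
  obtain ⟨add_zero, add_succ, -, -, -, -, hne, hinj, -⟩ := id hM
  induction n with
  | zero =>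
    intro x y h
    rcases hM.eq_zero_or_succ y with rfl | ⟨y, rfl⟩
    · rw [add_zero] at h
      exact ⟨⟨0, h⟩, ⟨0, rfl⟩⟩
    · rw [add_succ] at h
      exact absurd h (hne _)
  | succ n ih =>
    intro x y h
    rcases hM.eq_zero_or_succ y with rfl | ⟨y, rfl⟩
    · rw [add_zero] at h
      exact ⟨⟨n + 1, h⟩, ⟨0, rfl⟩⟩
    · rw [add_succ] at h
      obtain ⟨hx, m, rfl⟩ := ih (hinj _ _ h)
      exact ⟨hx, ⟨m + 1, rfl⟩⟩

theorem digitB_numeral (hM : IsPAModel M) (a l : ℕ) :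
    digitB (numeral M a) l ↔ a.testBit l = true := by
  have key : digitB (numeral M a) l ↔
      ∃ u v, v < 2 ^ l ∧ a = u * 2 ^ (l + 1) + (2 ^ l + v) := by
    constructor
    · rintro ⟨u, v, h, hv⟩
      obtain ⟨v, hvl, rfl⟩ := hM.ltM_numeral_iff.1 hv
      obtain ⟨b, hb⟩ := (hM.isStd_of_addM_eq_numeral h.symm).1
      obtain ⟨c, hc⟩ : ∃ c, 2 ^ (l + 1) = c + 1 := ⟨2 ^ (l + 1) - 1, by
        have := Nat.two_pow_pos (l + 1)
        omega⟩
      have hmul : mulM u (numeral M (c + 1)) = addM (mulM u (numeral M c)) u := hM.2.2.2.1 _ _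
      rw [hc, hmul] at hb
      obtain ⟨u, rfl⟩ := (hM.isStd_of_addM_eq_numeral hb).2
      rw [hM.mulM_numeral, hM.addM_numeral, hM.addM_numeral] at h
      exact ⟨u, v, hvl, hM.numeral_injective h⟩
    · rintro ⟨u, v, hv, rfl⟩
      refine ⟨numeral M u, numeral M v, ?_, hM.ltM_numeral_iff.2 ⟨v, hv, rfl⟩⟩
      rw [hM.mulM_numeral, hM.addM_numeral, hM.addM_numeral]
  rw [key, Nat.testBit_eq_decide_div_mod_eq, decide_eq_true_iff]
  have hpos := Nat.two_pow_pos l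
  constructor
  · rintro ⟨u, v, hv, rfl⟩
    have : u * 2 ^ (l + 1) + (2 ^ l + v) = v + 2 ^ l * (2 * u + 1) := by ring
    rw [this, Nat.add_mul_div_left _ _ hpos, Nat.div_eq_of_lt hv]
    omega
  · intro h
    refine ⟨a / 2 ^ l / 2, a % 2 ^ l, Nat.mod_lt _ hpos, ?_⟩
    have h1 := Nat.div_add_mod a (2 ^ l)
    have h2 := Nat.div_add_mod (a / 2 ^ l) 2
    rw [h] at h2
    calc a = 2 ^ l * (a / 2 ^ l) + a % 2 ^ l := h1.symm
      _ = 2 ^ l * (2 * (a / 2 ^ l / 2) + 1) + a % 2 ^ l := by rw [h2]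
      _ = _ := by ring

end IsPAModel

/-- The sum of two terms. -/
def addTerm {α : Type*} (s t : arith.Term α) : arith.Term α :=
  Functions.apply₂ (show arith.Functions 2 from arithFunc.add) s t

/-- The product of two terms. -/
def mulTerm {α : Type*} (s t : arith.Term α) : arith.Term α :=
  Functions.apply₂ (show arith.Functions 2 from arithFunc.mul) s t

theorem realize_addTerm {α : Type*} (s t : arith.Term α) (v : α → M) :
    (addTerm s t).realize v = addM (s.realize v) (t.realize v) :=
  Term.realize_functions_apply₂

theorem realize_mulTerm {α : Type*} (s t : arith.Term α) (v : α → M) :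
    (mulTerm s t).realize v = mulM (s.realize v) (t.realize v) :=
  Term.realize_functions_apply₂

/-- The formula expressing that one term is less than another. -/
def ltFormula {α : Type*} {n : ℕ} (s t : arith.Term (α ⊕ Fin n)) : arith.BoundedFormula α n :=
  Relations.boundedFormula₂ (show arith.Relations 2 from arithRel.lt) s t

theorem realize_ltFormula {α : Type*} {n : ℕ} (s t : arith.Term (α ⊕ Fin n)) (v : α → M)
    (xs : Fin n → M) : (ltFormula s t).Realize v xs ↔
      ltM (s.realize (Sum.elim v xs)) (t.realize (Sum.elim v xs)) :=
  BoundedFormula.realize_rel₂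

/-- The closed term denoting the numeral `n`. -/
def numeralTerm (α : Type*) : ℕ → arith.Term α
  | 0 => Constants.term (show arith.Constants from arithFunc.zero)
  | n + 1 => addTerm (numeralTerm α n) (Constants.term (show arith.Constants from arithFunc.one))

theorem realize_numeralTerm {α : Type*} (v : α → M) (n : ℕ) :
    (numeralTerm α n).realize v = numeral M n := by
  induction n with
  | zero =>
    exact Term.realize_constants.trans
      (congrArg (Structure.funMap (L := arith) arithFunc.zero) (Subsingleton.elim _ _))
  | succ n ih =>
    rw [numeralTerm, realize_addTerm, ih, numeral]
    exact congrArg _ (Term.realize_constants.trans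
      (congrArg (Structure.funMap (L := arith) arithFunc.one) (Subsingleton.elim _ _)))

/-- The formula expressing that the `i`-th binary digit of the variable is `1`. -/
def digitFormula (i : ℕ) : arith.Formula (Fin 1) :=
  BoundedFormula.ex (BoundedFormula.ex
    (Term.bdEqual (Term.var (Sum.inl 0))
        (addTerm (mulTerm (Term.var (Sum.inr 0)) (numeralTerm _ (2 ^ (i + 1))))
          (addTerm (numeralTerm _ (2 ^ i)) (Term.var (Sum.inr 1)))) ⊓
      ltFormula (Term.var (Sum.inr 1)) (numeralTerm _ (2 ^ i))))

theorem realize_digitFormula (i : ℕ) (v : Fin 1 → M) :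
    (digitFormula i).Realize v ↔ digitB (v 0) i := by
  simp only [digitFormula, Formula.Realize, BoundedFormula.realize_ex, BoundedFormula.realize_inf,
    BoundedFormula.realize_bdEqual, realize_ltFormula, realize_addTerm, realize_mulTerm,
    realize_numeralTerm, Term.realize_var]
  rfl

variable {M' : Type*} [arith.Structure M']

theorem digitB_map (g : M ↪ₑ[arith] M') (a : M) (i : ℕ) : digitB (g a) i ↔ digitB a i := by
  have := g.map_formula (digitFormula i) (fun _ => a)
  rwa [realize_digitFormula, realize_digitFormula] at this

theorem map_numeral (g : M ↪ₑ[arith] M') (n : ℕ) : g (numeral M n) = numeral M' n := by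
  have := HomClass.realize_term g (t := numeralTerm Empty n) (v := Empty.elim)
  rw [realize_numeralTerm, realize_numeralTerm] at this
  exact this.symm

theorem isStd_map (g : M ↪ₑ[arith] M') (a : M) : IsStd (g a) ↔ IsStd a := by
  refine exists_congr fun n => ?_
  rw [← map_numeral g, g.injective.eq_iff]

end Numerals

end Arith

section SkolemHull

open Filter

variable {L : FirstOrder.Language} {N : Type*} [L.Structure N]
variable {γ : Type*} (U : Ultrafilter γ)

/-- The element of an ultrapower represented by a sequence. -/
def ultrapowerMk (x : γ → N) : (U : Filter γ).Product (fun _ => N) :=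
  (x : (U : Filter γ).Product (fun _ => N))

theorem ultrapowerMk_surjective : Function.Surjective (ultrapowerMk (N := N) U) :=
  Quotient.exists_rep

variable [Nonempty N]

theorem realize_ultrapowerMk {α : Type*} {n : ℕ} (φ : L.BoundedFormula α n) (v : α → γ → N)
    (xs : Fin n → γ → N) :
    φ.Realize (fun i => ultrapowerMk U (v i)) (fun i => ultrapowerMk U (xs i)) ↔
      ∀ᶠ k in (U : Filter γ), φ.Realize (fun i => v i k) (fun i => xs i k) :=
  Ultraproduct.boundedFormula_realize_cast (u := U) (M := fun _ => N) φ v xs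

/-- The diagonal embedding of a structure into an ultrapower. -/
def ultrapowerDiag : N ↪ₑ[L] (U : Filter γ).Product (fun _ => N) where
  toFun a := ultrapowerMk U fun _ => a
  map_formula' := fun n φ x => by
    refine (Ultraproduct.realize_formula_cast (u := U) φ (fun i (_ : γ) => x i)).trans ?_
    exact eventually_const

/-- The elements of an ultrapower obtained from the sequences `c i` and the constant sequences
by applying terms with Skolem functions pointwise. -/
def skolemHullSubstructure {ι : Type*} (c : ι → γ → N) :
    L.Substructure ((U : Filter γ).Product (fun _ => N)) where
  carrier := {z | ∃ t : (L.sum L.skolem₁).Term (ι ⊕ N),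
    ultrapowerMk U (fun n => t.realize (Sum.elim (fun i => c i n) id)) = z}
  fun_mem := fun {n} f x hx => by
    choose t ht using hx
    refine ⟨Term.func (Sum.inl f) t, ?_⟩
    rw [← funext ht]
    exact (Ultraproduct.funMap_cast (u := U) (M := fun _ => N) f
      fun i n => (t i).realize (Sum.elim (fun i => c i n) id)).symm

/-- The elements of an ultrapower obtained from the sequences `c i` and the constant sequences
by applying terms with Skolem functions pointwise, as an elementary substructure. -/
def skolemHull {ι : Type*} (c : ι → γ → N) :
    L.ElementarySubstructure ((U : Filter γ).Product (fun _ => N)) :=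
  (skolemHullSubstructure U c).toElementarySubstructure fun n φ x a h => by
    choose t ht using fun i => (x i).2
    refine ⟨⟨_, Term.func (Sum.inr φ) t, rfl⟩, ?_⟩
    obtain ⟨a, rfl⟩ := ultrapowerMk_surjective U a
    have hsnoc : ∀ b : γ → N,
        (Fin.snoc ((↑) ∘ x) (ultrapowerMk U b) :
          Fin (n + 1) → (U : Filter γ).Product (fun _ => N)) =
        fun j => ultrapowerMk U ((Fin.snoc
          (fun i k => (t i).realize (Sum.elim (fun i => c i k) id)) b : Fin (n + 1) → γ → N) j) := by
      intro b
      ext j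
      refine Fin.lastCases ?_ (fun j => ?_) j
      · simp only [Fin.snoc_last]
      · simp only [Fin.snoc_castSucc]
        exact (ht j).symm
    have hsnoc' : ∀ (b : γ → N) (k : γ),
        (fun j => (Fin.snoc (fun i k => (t i).realize (Sum.elim (fun i => c i k) id)) b :
          Fin (n + 1) → γ → N) j k) =
        Fin.snoc (fun i => (t i).realize (Sum.elim (fun i => c i k) id)) (b k) := by
      intro b k
      ext j
      refine Fin.lastCases ?_ (fun j => ?_) j <;> simp
    have hreal : ∀ b : γ → N,
        φ.Realize default (Fin.snoc ((↑) ∘ x) (ultrapowerMk U b) :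
          Fin (n + 1) → (U : Filter γ).Product (fun _ => N)) ↔
        ∀ᶠ k in (U : Filter γ), φ.Realize default
          (Fin.snoc (fun i => (t i).realize (Sum.elim (fun i => c i k) id)) (b k)) := by
      intro b
      rw [hsnoc, Subsingleton.elim default
        (fun i : Empty => ultrapowerMk U (i.elim : γ → N)), realize_ultrapowerMk]
      refine eventually_congr (Eventually.of_forall fun k => ?_)
      rw [hsnoc', Subsingleton.elim (fun i : Empty => (i.elim : γ → N) k) default]
    refine (hreal fun k => (Term.func (Sum.inr φ) t).realize (Sum.elim (fun i => c i k) id)).2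
      (((hreal a).1 h).mono fun k hk => ?_)
    exact Classical.epsilon_spec (p := fun a => φ.Realize default (Fin.snoc _ a)) ⟨a k, hk⟩

variable {U}

theorem mem_skolemHull {ι : Type*} {c : ι → γ → N} {z : (U : Filter γ).Product (fun _ => N)} :
    z ∈ skolemHull (L := L) U c ↔ ∃ t : (L.sum L.skolem₁).Term (ι ⊕ N),
      ultrapowerMk U (fun n => t.realize (Sum.elim (fun i => c i n) id)) = z :=
  Iff.rfl

theorem ultrapowerDiag_mem_skolemHull {ι : Type*} (c : ι → γ → N) (a : N) :
    ultrapowerDiag (L := L) U a ∈ skolemHull (L := L) U c :=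
  mem_skolemHull.2 ⟨Term.var (Sum.inr a), rfl⟩

theorem ultrapowerMk_mem_skolemHull {ι : Type*} (c : ι → γ → N) (i : ι) :
    ultrapowerMk U (c i) ∈ skolemHull (L := L) U c :=
  mem_skolemHull.2 ⟨Term.var (Sum.inl i), rfl⟩

theorem skolemHull_comp_subset {ι κ : Type*} (c : ι → γ → N) (g : κ → ι) :
    (skolemHull (L := L) U (c ∘ g) : Set ((U : Filter γ).Product (fun _ => N))) ⊆
      skolemHull (L := L) U c := by
  rintro _ ⟨t, rfl⟩
  refine mem_skolemHull.2 ⟨t.relabel (Sum.map g id), ?_⟩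
  congr 1
  ext n
  rw [Term.realize_relabel]
  congr 1
  ext (i | a) <;> rfl

theorem mk_skolemHull_le {L : FirstOrder.Language.{0, 0}} {N ι γ : Type} [L.Structure N]
    [Nonempty N] [Countable L.Symbols] [Countable N] (U : Ultrafilter γ) (c : ι → γ → N) :
    Cardinal.mk (skolemHull (L := L) U c) ≤ max Cardinal.aleph0 (Cardinal.mk ι) := by
  have h1 : Cardinal.mk (skolemHull (L := L) U c) ≤
      Cardinal.mk ((L.sum L.skolem₁).Term (ι ⊕ N)) := Cardinal.mk_range_le
  have hF : Cardinal.mk (Σ n, (L.sum L.skolem₁).Functions n) ≤ Cardinal.aleph0 :=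
    card_functions_sum_skolem₁_le.trans (max_le le_rfl Cardinal.mk_le_aleph0)
  refine h1.trans (Term.card_le.trans (max_le (le_max_left _ _) ?_))
  simp only [Cardinal.mk_sum, Cardinal.lift_id]
  refine Cardinal.add_le_of_le (le_max_left _ _) (Cardinal.add_le_of_le (le_max_left _ _)
    (le_max_right _ _) (Cardinal.mk_le_aleph0.trans (le_max_left _ _)))
    (hF.trans (le_max_left _ _))

end SkolemHull

namespace Arith

instance : Countable arith.Symbols := by
  have h1 : ∀ n, Countable (arith.Functions n) := fun n =>
    Function.Injective.countable (β := ℕ)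
      (f := fun f : arithFunc n => match f with | .zero => 0 | .one => 1 | .add => 0 | .mul => 1)
      (by intro a b h; cases a <;> cases b <;> first | rfl | simp at h)
  have h2 : ∀ n, Countable (arith.Relations n) := fun n =>
    Function.Injective.countable (β := ℕ) (f := fun _ : arithRel n => 0)
      (by intro a b _; cases a; cases b; rfl)
  exact inferInstanceAs (Countable ((Σ n, arith.Functions n) ⊕ (Σ n, arith.Relations n)))

theorem IsPAModel.nonempty {M : Type*} [arith.Structure M] (_ : IsPAModel M) : Nonempty M :=
  ⟨zeroM M⟩

theorem digitB_ultrapowerMk {N γ : Type*} [arith.Structure N] [Nonempty N] (U : Ultrafilter γ)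
    (x : γ → N) (i : ℕ) :
    digitB (ultrapowerMk U x) i ↔ ∀ᶠ k in (U : Filter γ), digitB (x k) i := by
  have := realize_ultrapowerMk U (digitFormula i) (fun _ => x) Fin.elim0
  rw [Subsingleton.elim (fun j : Fin 0 => ultrapowerMk U (j.elim0 : γ → N)) default] at this
  refine (realize_digitFormula i _).symm.trans (this.trans ?_)
  refine Filter.eventually_congr (Filter.Eventually.of_forall fun k => ?_)
  rw [Subsingleton.elim (fun j : Fin 0 => (j.elim0 : γ → N) k) default]
  exact realize_digitFormula i _

theorem mem_SSy_elementarySubstructure {M : Type*} [arith.Structure M]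
    {S : arith.ElementarySubstructure M} {A : Set ℕ} :
    A ∈ SSy S ↔ ∃ a ∈ S, ¬ IsStd a ∧ ∀ i, i ∈ A ↔ digitB a i := by
  constructor
  · rintro ⟨a, ha, hA⟩
    exact ⟨a, a.2, fun h => ha ((isStd_map S.subtype a).1 h),
      fun i => (hA i).trans (digitB_map S.subtype a i).symm⟩
  · rintro ⟨a, haS, ha, hA⟩
    exact ⟨⟨a, haS⟩, fun h => ha ((isStd_map S.subtype ⟨a, haS⟩).2 h),
      fun i => (hA i).trans (digitB_map S.subtype ⟨a, haS⟩ i)⟩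

theorem mk_SSy_le {M : Type} [arith.Structure M] : Cardinal.mk (SSy M) ≤ Cardinal.mk M := by
  refine (Cardinal.mk_le_mk_of_subset (t := Set.range fun a : M => {i | digitB a i}) ?_).trans
    Cardinal.mk_range_le
  rintro A ⟨a, -, hA⟩
  exact ⟨a, Set.ext fun i => (hA i).symm⟩

/-- A family of sequences of elements of a model whose digits cannot be recovered from those of
other members of the family. -/
def IsGenericFamily {N ι : Type*} [arith.Structure N] [Nonempty N] (c : ι → ℕ → N) : Prop :=
  ∀ (p : ℕ) (t : (arith.sum arith.skolem₁).Term (Fin p ⊕ N)) (ρ : Fin p → ι) (i : ι),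
    i ∉ Set.range ρ → ∃ b k, ∀ n ≥ k, ∃ l < b,
      ¬ (digitB (c i n) l ↔ digitB (t.realize (Sum.elim (fun q => c (ρ q) n) id)) l)

theorem IsPAModel.exists_isGenericFamily {N : Type} [arith.Structure N] [Nonempty N]
    [Countable N] (hN : IsPAModel N) :
    ∃ c : (ℕ → Bool) → ℕ → N, IsGenericFamily c := by
  have : Countable (Σ n, (arith.sum arith.skolem₁).Functions n) :=
    Cardinal.mk_le_aleph0_iff.1
      (card_functions_sum_skolem₁_le.trans (max_le le_rfl Cardinal.mk_le_aleph0))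
  have : Nonempty (Σ p, (arith.sum arith.skolem₁).Term (Fin p ⊕ N)) :=
    ⟨0, Term.var (Sum.inr (Classical.arbitrary N))⟩
  obtain ⟨T, hT⟩ := exists_surjective_nat (Σ p, (arith.sum arith.skolem₁).Term (Fin p ⊕ N))
  obtain ⟨x, hx⟩ := exists_generic_labels (N := N) digitB
    (fun m a => numeral N (Nat.ofBits a))
    (fun m a l hl => by rw [hN.digitB_numeral, Nat.testBit_ofBits_lt])
    (fun j => (T j).1) (fun j v => (T j).2.realize (Sum.elim v id))
  refine ⟨fun f n => x n (Level.restrict n f), fun p t ρ f hf => ?_⟩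
  obtain ⟨j, hj⟩ := hT ⟨p, t⟩
  have h := hx j
  rw [hj] at h
  exact h ρ f hf

namespace IsGenericFamily

variable {N ι κ : Type*} [arith.Structure N] [Nonempty N] {c : ι → ℕ → N}

theorem comp (hc : IsGenericFamily c) {g : κ → ι} (hg : g.Injective) :
    IsGenericFamily (c ∘ g) := by
  intro p t ρ i hi
  refine hc p t (g ∘ ρ) (g i) ?_
  rintro ⟨q, hq⟩
  exact hi ⟨q, hg hq⟩

theorem exists_digitB_ne (hc : IsGenericFamily c) {U : Ultrafilter ℕ}
    (hU : (U : Filter ℕ) ≤ Filter.atTop) (g : κ → ι) {i : ι} (hi : i ∉ Set.range g)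
    {z : (U : Filter ℕ).Product (fun _ => N)}
    (hz : z ∈ skolemHull (L := arith) U (c ∘ g)) :
    ∃ l, ¬ (digitB (ultrapowerMk U (c i)) l ↔ digitB z l) := by
  classical
  obtain ⟨t, rfl⟩ := mem_skolemHull.1 hz
  let e := t.varFinsetLeft.equivFin
  obtain ⟨b, k, hbk⟩ := hc _ (t.restrictVarLeft e) (fun q => g (e.symm q)) i (by
    rintro ⟨q, hq⟩
    exact hi ⟨_, hq⟩)
  have hreal : ∀ n, (t.restrictVarLeft e).realize
      (Sum.elim (fun q => c (g (e.symm q)) n) id) =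
      t.realize (Sum.elim (fun q => (c ∘ g) q n) id) := fun n =>
    Term.realize_restrictVarLeft (fun q => (c ∘ g) q n) (by simp)
  simp only [hreal] at hbk
  by_contra! hcon
  have hl : ∀ l, ∀ᶠ n in (U : Filter ℕ), (digitB (c i n) l ↔
      digitB (t.realize (Sum.elim (fun q => (c ∘ g) q n) id)) l) := by
    intro l
    have h := hcon l
    rw [digitB_ultrapowerMk, digitB_ultrapowerMk] at h
    by_cases h1 : ∀ᶠ n in (U : Filter ℕ), digitB (c i n) l
    · filter_upwards [h1, h.1 h1] with n h2 h3 using iff_of_true h2 h3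
    · filter_upwards [Ultrafilter.eventually_not.2 h1,
        Ultrafilter.eventually_not.2 (fun h2 => h1 (h.2 h2))] with n h2 h3 using
        iff_of_false h2 h3
  obtain ⟨n, hn, hnk⟩ := (((Filter.eventually_all_finite (Set.finite_Iio b)).2
    fun l _ => hl l).and (hU (Filter.eventually_ge_atTop k))).exists
  obtain ⟨l, hlb, hne⟩ := hbk n hnk
  exact hne (hn l hlb)

theorem digits_mem_SSy_iff (hc : IsGenericFamily c) {U : Ultrafilter ℕ}
    (hU : (U : Filter ℕ) ≤ Filter.atTop) (g : κ → ι) (i : ι) :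
    {l | digitB (ultrapowerMk U (c i)) l} ∈
      SSy (skolemHull (L := arith) U (c ∘ g)) ↔ i ∈ Set.range g := by
  rw [mem_SSy_elementarySubstructure]
  constructor
  · rintro ⟨a, ha, -, hA⟩
    by_contra hi
    obtain ⟨l, hl⟩ := hc.exists_digitB_ne hU g hi ha
    exact hl (hA l)
  · rintro ⟨q, rfl⟩
    refine ⟨_, ultrapowerMk_mem_skolemHull (c ∘ g) q, ?_, fun _ => Iff.rfl⟩
    rintro ⟨n, hn⟩
    obtain ⟨l, hl⟩ := hc.exists_digitB_ne hU (Empty.elim : Empty → ι) (i := g q) (by simp)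
      (ultrapowerDiag_mem_skolemHull (L := arith) _ (numeral N n))
    rw [map_numeral] at hl
    exact hl (by rw [← hn]; rfl)

theorem digits_injective (hc : IsGenericFamily c) {U : Ultrafilter ℕ}
    (hU : (U : Filter ℕ) ≤ Filter.atTop) : Function.Injective
      fun i => {l | digitB (ultrapowerMk U (c i)) l} := by
  intro i j hij
  have h := (hc.digits_mem_SSy_iff hU (fun _ : Unit => j) j).2 ⟨(), rfl⟩
  change {l | digitB (ultrapowerMk U (c i)) l} =
    {l | digitB (ultrapowerMk U (c j)) l} at hij
  rw [← hij, hc.digits_mem_SSy_iff hU] at h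
  obtain ⟨_, h⟩ := h
  exact h.symm

theorem mk_skolemHull_eq {N ι κ : Type} [arith.Structure N] [Nonempty N] [Countable N]
    {c : ι → ℕ → N} (hc : IsGenericFamily c) {U : Ultrafilter ℕ}
    (hU : (U : Filter ℕ) ≤ Filter.atTop) {g : κ → ι} (hg : g.Injective) [Infinite κ] :
    Cardinal.mk (skolemHull (L := arith) U (c ∘ g)) = Cardinal.mk κ ∧
      Cardinal.mk (SSy (skolemHull (L := arith) U (c ∘ g))) = Cardinal.mk κ := by
  have h1 : Cardinal.mk κ ≤ Cardinal.mk (SSy (skolemHull (L := arith) U (c ∘ g))) :=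
    Cardinal.mk_le_of_injective
      (f := fun q => ⟨_, (hc.digits_mem_SSy_iff hU g (g q)).2 ⟨q, rfl⟩⟩)
      fun q r h => hg (hc.digits_injective hU (Subtype.ext_iff.1 h))
  have h2 : Cardinal.mk (SSy (skolemHull (L := arith) U (c ∘ g))) ≤
      Cardinal.mk (skolemHull (L := arith) U (c ∘ g)) := mk_SSy_le
  have h3 := mk_skolemHull_le (L := arith) U (c ∘ g)
  rw [max_eq_right (Cardinal.aleph0_le_mk κ)] at h3
  exact ⟨h3.antisymm (h1.trans h2), (h2.trans h3).antisymm h1⟩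

end IsGenericFamily

end Arith

open Arith in
/-- For every countable non-standard model `N` of `PA` there is a family
`(M_X : X ⊆ 2^ω)` of elementary extensions of `N` (realized as elementary substructures
of one elementary extension `N'` of `N`) with `|M_X| = |SSy(M_X)| = max{ω, |X|}` and
`X ⊆ Y ⟺ M_X ≼ M_Y ⟺ SSy(M_X) ⊆ SSy(M_Y)`. -/
theorem statement_5 (N : Type) [arith.Structure N] (hN : NonstandardModel N)
    (hNc : Countable N) :
    ∃ (N' : Type) (_ : arith.Structure N') (e : N ↪ₑ[arith] N')
      (Mfam : Set (Set ℕ) → arith.ElementarySubstructure N'),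
      (∀ X : Set (Set ℕ), Set.range e ⊆ (Mfam X : Set N')) ∧
      (∀ X : Set (Set ℕ),
        Cardinal.mk (Mfam X) = max Cardinal.aleph0 (Cardinal.mk X) ∧
        Cardinal.mk (SSy (Mfam X)) = max Cardinal.aleph0 (Cardinal.mk X)) ∧
      (∀ X Y : Set (Set ℕ),
        (X ⊆ Y ↔ (Mfam X : Set N') ⊆ (Mfam Y : Set N')) ∧
        (X ⊆ Y ↔ SSy (Mfam X) ⊆ SSy (Mfam Y))) := by
  have := hN.1.nonempty
  obtain ⟨c, hc⟩ := hN.1.exists_isGenericFamily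
  obtain ⟨j, hj⟩ : ∃ j : Set ℕ ⊕ ℕ → ℕ → Bool, j.Injective := by
    refine (Cardinal.le_def _ _).1 ?_ |>.elim fun j => ⟨j, j.injective⟩
    simp
  replace hc := hc.comp hj
  have hU : (Filter.hyperfilter ℕ : Filter ℕ) ≤ Filter.atTop := by
    rw [← Nat.cofinite_eq_atTop]
    exact Filter.hyperfilter_le_cofinite
  let g : ∀ X : Set (Set ℕ), X ⊕ ℕ → Set ℕ ⊕ ℕ := fun X => Sum.map Subtype.val id
  have hg : ∀ X, (g X).Injective := fun X =>
    Sum.map_injective.2 ⟨Subtype.val_injective, Function.injective_id⟩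
  have hmem : ∀ {X : Set (Set ℕ)} {A : Set ℕ}, Sum.inl A ∈ Set.range (g X) ↔ A ∈ X := by
    intro X A
    constructor
    · rintro ⟨A' | n, h⟩
      · exact Sum.inl_injective h ▸ A'.2
      · exact absurd h (by simp [g])
    · exact fun h => ⟨Sum.inl ⟨A, h⟩, rfl⟩
  let N' : Type := (Filter.hyperfilter ℕ : Filter ℕ).Product fun _ => N
  let : arith.Structure N' := Ultraproduct.structure
  let H : Set (Set ℕ) → arith.ElementarySubstructure N' :=
    fun X => skolemHull (Filter.hyperfilter ℕ) ((c ∘ j) ∘ g X)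
  have hmono : ∀ {X Y}, X ⊆ Y → (H X : Set N') ⊆ (H Y : Set N') := by
    intro X Y h
    have : (c ∘ j) ∘ g X = ((c ∘ j) ∘ g Y) ∘ Sum.map (Set.inclusion h) id := by
      ext (A | n) <;> rfl
    simp only [H]
    rw [this]
    exact skolemHull_comp_subset _ _
  have hSSy : ∀ {X Y}, (H X : Set N') ⊆ (H Y : Set N') → SSy (H X) ⊆ SSy (H Y) := by
    intro X Y h A hA
    obtain ⟨a, ha, hA⟩ := mem_SSy_elementarySubstructure.1 hA
    exact mem_SSy_elementarySubstructure.2 ⟨a, h ha, hA⟩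
  have hback : ∀ {X Y}, SSy (H X) ⊆ SSy (H Y) → X ⊆ Y := by
    intro X Y h A hA
    exact hmem.1 ((hc.digits_mem_SSy_iff hU (g Y) (Sum.inl A)).1
      (h ((hc.digits_mem_SSy_iff hU (g X) (Sum.inl A)).2 (hmem.2 hA))))
  refine ⟨_, inferInstance, ultrapowerDiag (Filter.hyperfilter ℕ), H, ?_, ?_, ?_⟩
  · rintro X _ ⟨a, rfl⟩
    exact ultrapowerDiag_mem_skolemHull _ a
  · intro X
    have hX : max Cardinal.aleph0 (Cardinal.mk X) = Cardinal.mk (X ⊕ ℕ) := by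
      rw [Cardinal.mk_sum, Cardinal.lift_id, Cardinal.lift_id, Cardinal.mk_nat,
        Cardinal.add_eq_max' le_rfl, max_comm]
    rw [hX]
    exact hc.mk_skolemHull_eq hU (hg X)
  · exact fun X Y => ⟨⟨hmono, fun h => hback (hSSy h)⟩, ⟨fun h => hSSy (hmono h), hback⟩⟩
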